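/- arXiv:2110.10660 — 5 statements merged into one kernel-verified Lean document; each statement's English description precedes it below -/
import Mathlib

section
/- Let y, v : [0, ∞) → ℝ be differentiable functions satisfying the closed-loop equations y′(t) = −y(t)·v(t) and v′(t) = −v(t) + y(t)² − 2v(t)² for all t ≥ 0. If v(0) = y(0)², then v(t) = y(t)² for all t ≥ 0. -/
/-!
The defect `w = v - y²` satisfies the linear equation `w' = -(1 + 2v) w` along any solution. On a
compact interval `[0, T]` the coefficient is bounded by continuity of `v`, so Grönwall's
inequality with `w(0) = 0` gives `w = 0`.
-/

/-- Invariance of the center manifold `v = y²` for the closed-loop system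
`ẏ = −yv`, `v̇ = −v + y² − 2v²` of Example 1: if `v(0) = y(0)²` then
`v(t) = y(t)²` for all `t ≥ 0`. -/
theorem center_manifold_invariant_example1 (y v : ℝ → ℝ)
    (hy : ∀ t : ℝ, 0 ≤ t →
      HasDerivWithinAt y (-(y t * v t)) (Set.Ici (0 : ℝ)) t)
    (hv : ∀ t : ℝ, 0 ≤ t →
      HasDerivWithinAt v (-(v t) + (y t) ^ 2 - 2 * (v t) ^ 2) (Set.Ici (0 : ℝ)) t)
    (h0 : v 0 = (y 0) ^ 2) :
    ∀ t : ℝ, 0 ≤ t → v t = (y t) ^ 2 := by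
  intro T hT
  have hsub : Set.Icc 0 T ⊆ Set.Ici (0 : ℝ) := Set.Icc_subset_Ici_self
  have hw : ∀ t : ℝ, 0 ≤ t → HasDerivWithinAt (fun s => v s - y s ^ 2)
      (-(1 + 2 * v t) * (v t - y t ^ 2)) (Set.Ici (0 : ℝ)) t := by
    intro t ht
    refine ((hv t ht).sub ((hy t ht).pow 2)).congr_deriv ?_
    push_cast
    ring
  have hvc : ContinuousOn v (Set.Icc 0 T) := fun t ht =>
    (hv t ht.1).continuousWithinAt.mono hsub
  obtain ⟨K, hK⟩ := isCompact_Icc.exists_bound_of_continuousOn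
    (f := fun t => -(1 + 2 * v t)) (by fun_prop)
  have hzero := eq_zero_of_abs_deriv_le_mul_abs_self_of_eq_zero_right (K := K)
    (fun t ht => (hw t ht.1).continuousWithinAt.mono hsub)
    (fun t ht => (hw t ht.1).mono (Set.Ici_subset_Ici.2 ht.1))
    (sub_eq_zero.2 h0)
    (fun t ht => by
      rw [norm_mul]
      exact mul_le_mul_of_nonneg_right (hK t ⟨ht.1, ht.2.le⟩) (norm_nonneg _))
    T ⟨hT, le_rfl⟩
  exact sub_eq_zero.1 hzero
end

section
/- For all real numbers y, w, e with 0 < |y| ≤ 1/√6, 0 < |w| ≤ 1/6, and |e| ≤ (1/16)·(|w| + y⁴), the following inequality holds: (y·(−y³ − y·w))/|y| + (w·(−w − 2e − w·(w + y²)))/|w| ≤ −(1/2)·|y|³ − (1/16)·|w|. -/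
/-!
With `a = |y|` and `b = |w|`, the first quotient is `-a³ - a w ≤ -a³ + a b` and the second is
`-b - 2 e (w / b) - b (w + a²) ≤ -b + 2 |e| + b²`. Since `2 |e| ≤ (b + a⁴) / 8`, the region bounds
`a ≤ 1/2` and `b ≤ 1/6` absorb `a⁴ / 8` into `a³ / 2` and leave a `b`-coefficient of at most
`1/2 - 1 + 1/8 + 1/6 < -1/16`.
-/

/-- Lyapunov decrease estimate for Example 1: in the region `0 < |y| ≤ 1/√6`,
`0 < |w| ≤ 1/6`, with the triggering rule ensuring `|e| ≤ (1/16)(|w| + y⁴)`,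
the derivative of `V = |y| + |w|` along `ẏ = −y³ − yw`, `ẇ = −w − 2e − w(w + y²)`
satisfies `V̇ ≤ −(1/2)|y|³ − (1/16)|w|`. -/
theorem example1_lyapunov_decrease (y w e : ℝ)
    (hy0 : 0 < |y|) (hy : |y| ≤ 1 / Real.sqrt 6)
    (hw0 : 0 < |w|) (hw : |w| ≤ 1 / 6)
    (he : |e| ≤ (1 / 16) * (|w| + y ^ 4)) :
    (y * (-y ^ 3 - y * w)) / |y| + (w * (-w - 2 * e - w * (w + y ^ 2))) / |w| ≤
      -(1 / 2) * |y| ^ 3 - (1 / 16) * |w| := by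
  -- The cruder bound `1/√6 ≤ 1/2` is all that is needed.
  have ha : |y| ≤ 1 / 2 := by
    refine hy.trans (one_div_le_one_div_of_le two_pos ?_)
    exact Real.le_sqrt_of_sq_le (by norm_num)
  have h1 : (y * (-y ^ 3 - y * w)) / |y| = -|y| ^ 3 - |y| * w := by
    rw [div_eq_iff hy0.ne']
    linear_combination (-(y ^ 2 + |y| ^ 2) - w) * (sq_abs y).symm
  have h2 : (w * (-w - 2 * e - w * (w + y ^ 2))) / |w| ≤ -|w| + 2 * |e| + |w| ^ 2 := by
    rw [div_le_iff₀ hw0]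
    have hwe : -(w * e) ≤ |w| * |e| := by
      rw [← abs_mul]; exact neg_le_abs _
    have hw3 : -(w * w ^ 2) ≤ |w| * |w| ^ 2 := by
      rw [sq_abs, ← neg_mul]
      exact mul_le_mul_of_nonneg_right (neg_le_abs w) (sq_nonneg w)
    nlinarith [sq_abs w, mul_nonneg (sq_nonneg w) (sq_nonneg y)]
  have h3 : -(|y| * w) ≤ 1 / 2 * |w| := by
    have hyw : |y| * -w ≤ |y| * |w| := mul_le_mul_of_nonneg_left (neg_le_abs w) hy0.le
    have hab : |y| * |w| ≤ 1 / 2 * |w| := mul_le_mul_of_nonneg_right ha hw0.le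
    linarith
  have h4 : y ^ 4 ≤ 1 / 2 * |y| ^ 3 := by
    have hpow : |y| * |y| ^ 3 ≤ 1 / 2 * |y| ^ 3 :=
      mul_le_mul_of_nonneg_right ha (by positivity)
    calc y ^ 4 = |y| ^ 4 := (Even.pow_abs (by decide) y).symm
      _ = |y| * |y| ^ 3 := by ring
      _ ≤ _ := hpow
  have h5 : |w| ^ 2 ≤ 1 / 6 * |w| := by
    rw [sq]; exact mul_le_mul_of_nonneg_right hw hw0.le
  have h6 : 0 < |y| ^ 3 := by positivity
  rw [h1]
  linarith
end

section
/- Let a₁, a₄, σ, T > 0 and a₂ ≥ 0 with 4a₁a₄ > a₂², and set b = √(4a₁a₄ − a₂²). Let u : ℝ → ℝ be differentiable on [0, T] with u(0) = 0, u′(t) ≤ a₁ + a₂·u(t) + a₄·u(t)² for all t ∈ [0, T], and u(T) ≥ σ. Then T ≥ (2/b)·(arctan((2a₄σ + a₂)/b) − arctan(a₂/b)), and this lower bound is strictly positive. -/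
/-!
The primitive of `1 / (a₁ + a₂ x + a₄ x²)` is `x ↦ (2/b) arctan ((2 a₄ x + a₂) / b)`, because
`b² + (2 a₄ x + a₂)² = 4 a₄ (a₁ + a₂ x + a₄ x²)`. Composed with `u` it has derivative
`u' / (a₁ + a₂ u + a₄ u²) ≤ 1`, so by the mean value theorem it grows by at most `T` on `[0, T]`;
monotonicity of `arctan` replaces `u T` by `σ`. No blow-up or comparison argument is needed, as
the quadratic is positive everywhere.
-/

/-- Comparison-lemma bound on the inter-event time: if `u(0) = 0`,
`u′ ≤ a₁ + a₂ u + a₄ u²` on `[0, T]` and `u(T) ≥ σ`, then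
`T ≥ (2/b)(arctan((2a₄σ + a₂)/b) − arctan(a₂/b)) > 0`, where `b = √(4a₁a₄ − a₂²)`. -/
theorem inter_event_time_lower_bound (a₁ a₂ a₄ σ T b : ℝ)
    (ha₁ : 0 < a₁) (ha₂ : 0 ≤ a₂) (ha₄ : 0 < a₄) (hσ : 0 < σ) (hT : 0 < T)
    (hdisc : a₂ ^ 2 < 4 * a₁ * a₄)
    (hb : b = Real.sqrt (4 * a₁ * a₄ - a₂ ^ 2))
    (u u' : ℝ → ℝ)
    (hderiv : ∀ t ∈ Set.Icc (0 : ℝ) T, HasDerivWithinAt u (u' t) (Set.Icc (0 : ℝ) T) t)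
    (hbound : ∀ t ∈ Set.Icc (0 : ℝ) T, u' t ≤ a₁ + a₂ * u t + a₄ * (u t) ^ 2)
    (h0 : u 0 = 0) (hfin : σ ≤ u T) :
    (2 / b) * (Real.arctan ((2 * a₄ * σ + a₂) / b) - Real.arctan (a₂ / b)) ≤ T ∧
      0 < (2 / b) * (Real.arctan ((2 * a₄ * σ + a₂) / b) - Real.arctan (a₂ / b)) := by
  have hb0 : 0 < b := by rw [hb]; exact Real.sqrt_pos.2 (by linarith)
  have hb2 : b ^ 2 = 4 * a₁ * a₄ - a₂ ^ 2 := by rw [hb]; exact Real.sq_sqrt (by linarith)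
  have hid (x : ℝ) :
      b ^ 2 + (2 * a₄ * x + a₂) ^ 2 = 4 * a₄ * (a₁ + a₂ * x + a₄ * x ^ 2) := by
    rw [hb2]; ring
  have hpos (x : ℝ) : 0 < b ^ 2 + (2 * a₄ * x + a₂) ^ 2 := by positivity
  constructor
  · have hG : ∀ t ∈ Set.Icc (0 : ℝ) T,
        HasDerivWithinAt (fun t => (2 / b) * Real.arctan ((2 * a₄ * u t + a₂) / b))
          (4 * a₄ * u' t / (b ^ 2 + (2 * a₄ * u t + a₂) ^ 2)) (Set.Icc (0 : ℝ) T) t := by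
      intro t ht
      have h := (((((hderiv t ht).const_mul (2 * a₄)).add_const a₂).div_const b).arctan).const_mul
        (2 / b)
      refine h.congr_deriv ?_
      have h1 := (hpos (u t)).ne'
      have h2 : 1 + ((2 * a₄ * u t + a₂) / b) ^ 2 = (b ^ 2 + (2 * a₄ * u t + a₂) ^ 2) / b ^ 2 := by
        field_simp
      rw [h2]
      field_simp
      ring
    obtain ⟨c, hc, hslope⟩ := exists_hasDerivAt_eq_slope _ _ hT
      (fun t ht => (hG t ht).continuousWithinAt)
      (fun t ht => (hG t (Set.Ioo_subset_Icc_self ht)).hasDerivAt (Icc_mem_nhds ht.1 ht.2))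
    have hle : 4 * a₄ * u' c / (b ^ 2 + (2 * a₄ * u c + a₂) ^ 2) ≤ 1 := by
      rw [div_le_one (hpos _), hid]
      exact mul_le_mul_of_nonneg_left (hbound c (Set.Ioo_subset_Icc_self hc)) (by positivity)
    rw [hslope, sub_zero, div_le_one hT, h0, mul_zero, zero_add, ← mul_sub] at hle
    refine le_trans ?_ hle
    have : Real.arctan ((2 * a₄ * σ + a₂) / b) ≤ Real.arctan ((2 * a₄ * u T + a₂) / b) :=
      Real.arctan_mono (by gcongr)
    gcongr
  · have : Real.arctan (a₂ / b) < Real.arctan ((2 * a₄ * σ + a₂) / b) := by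
      apply Real.arctan_strictMono
      gcongr
      have := mul_pos ha₄ hσ
      linarith
    exact mul_pos (by positivity) (sub_pos.2 this)
end

section
/- Let L, δ, σ, T > 0 and let e : ℝ → ℝⁿ be differentiable on [0, T] with e(0) = 0 and ‖e′(t)‖ ≤ L·‖e(t)‖ + δ for all t ∈ [0, T]. If ‖e(T)‖ ≥ σ, then T ≥ (1/L)·ln(1 + σ·L/δ). -/
/-!
Comparison with the scalar equation `u' = L u + δ`, `u 0 = 0` (Grönwall's inequality) gives
`σ ≤ ‖e T‖ ≤ (δ / L) (exp (L T) - 1)`; solving this inequality for `T` is the claim.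
-/

/-- Grönwall-type Zeno-exclusion bound: if `e(0) = 0`, `‖e′(t)‖ ≤ L‖e(t)‖ + δ` on
`[0, T]` and `‖e(T)‖ ≥ σ`, then `T ≥ (1/L) ln(1 + σL/δ)`. -/
theorem zeno_exclusion_time_bound (n : ℕ) (L δ σ T : ℝ)
    (hL : 0 < L) (hδ : 0 < δ) (hσ : 0 < σ) (hT : 0 < T)
    (e e' : ℝ → EuclideanSpace ℝ (Fin n))
    (hderiv : ∀ t ∈ Set.Icc (0 : ℝ) T, HasDerivWithinAt e (e' t) (Set.Icc (0 : ℝ) T) t)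
    (hbound : ∀ t ∈ Set.Icc (0 : ℝ) T, ‖e' t‖ ≤ L * ‖e t‖ + δ)
    (h0 : e 0 = 0) (hfin : σ ≤ ‖e T‖) :
    (1 / L) * Real.log (1 + σ * L / δ) ≤ T := by
  -- Grönwall's inequality with zero initial value: `‖e T‖ ≤ (δ / L) (exp (L T) - 1)`.
  have hG : ‖e T‖ ≤ gronwallBound 0 L δ (T - 0) := by
    refine norm_le_gronwallBound_of_norm_deriv_right_le (f' := e')
      (fun t ht => (hderiv t ht).continuousWithinAt) (fun t ht => ?_) (by simp [h0])
      (fun t ht => hbound t (Set.Ico_subset_Icc_self ht)) T ⟨hT.le, le_rfl⟩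
    exact (hderiv t (Set.Ico_subset_Icc_self ht)).mono_of_mem_nhdsWithin
      (Icc_mem_nhdsGE_of_mem ht)
  rw [gronwallBound_of_K_ne_0 hL.ne'] at hG
  simp only [zero_mul, zero_add, sub_zero] at hG
  have hexp : 1 + σ * L / δ ≤ Real.exp (L * T) := by
    have h : σ * L / δ ≤ Real.exp (L * T) - 1 := by
      rw [div_le_iff₀ hδ]
      calc σ * L ≤ δ / L * (Real.exp (L * T) - 1) * L := by
            gcongr
            exact hfin.trans hG
        _ = (Real.exp (L * T) - 1) * δ := by field_simp
    linarith
  have hlog : Real.log (1 + σ * L / δ) ≤ L * T :=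
    (Real.log_le_iff_le_exp (by positivity)).2 hexp
  rw [one_div, inv_mul_le_iff₀ hL]
  exact hlog
end

section
/- Let L, σ, T > 0 and let φ : ℝ → ℝ be differentiable on [0, T] with φ(0) = 0, φ(t) ≥ 0 and φ′(t) ≤ L·(1 + φ(t))² for all t ∈ [0, T]. If φ(T) ≥ σ, then T ≥ σ/(L·(1 + σ)). -/
/-! The substitution `u = 1 / (1 + φ)` linearizes the differential inequality: `u' = -φ' / (1 + φ)² ≥ -L`,
so `t ↦ u t + L * t` is nondecreasing on `[0, T]`. Comparing its endpoint values gives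
`1 ≤ 1 / (1 + φ T) + L * T ≤ 1 / (1 + σ) + L * T`, which rearranges to the bound. -/

/-- Inter-event-time bound for the relative triggering rule: if `φ(0) = 0`,
`φ ≥ 0`, `φ′ ≤ L(1 + φ)²` on `[0, T]` and `φ(T) ≥ σ`, then `T ≥ σ/(L(1 + σ))`. -/
theorem relative_threshold_inter_event_bound (L σ T : ℝ)
    (hL : 0 < L) (hσ : 0 < σ) (hT : 0 < T)
    (φ φ' : ℝ → ℝ)
    (hderiv : ∀ t ∈ Set.Icc (0 : ℝ) T, HasDerivWithinAt φ (φ' t) (Set.Icc (0 : ℝ) T) t)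
    (hnonneg : ∀ t ∈ Set.Icc (0 : ℝ) T, 0 ≤ φ t)
    (hbound : ∀ t ∈ Set.Icc (0 : ℝ) T, φ' t ≤ L * (1 + φ t) ^ 2)
    (h0 : φ 0 = 0) (hfin : σ ≤ φ T) :
    σ / (L * (1 + σ)) ≤ T := by
  have hmono : MonotoneOn (fun t => (1 + φ t)⁻¹ + L * t) (Set.Icc 0 T) := by
    have hd : ∀ t ∈ Set.Icc (0 : ℝ) T, HasDerivWithinAt (fun t => (1 + φ t)⁻¹ + L * t)
        (-φ' t / (1 + φ t) ^ 2 + L * 1) (Set.Icc 0 T) t := fun t ht =>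
      (((hderiv t ht).const_add 1).fun_inv (by linarith [hnonneg t ht])).add
        ((hasDerivWithinAt_id t _).const_mul L)
    refine monotoneOn_of_hasDerivWithinAt_nonneg (convex_Icc 0 T)
      (fun t ht => (hd t ht).continuousWithinAt)
      (fun t ht => (hd t (interior_subset ht)).mono interior_subset) fun t ht => ?_
    have ht' := interior_subset ht
    have hpos : 0 < (1 + φ t) ^ 2 := by
      have := hnonneg t ht'
      positivity
    have hle : φ' t / (1 + φ t) ^ 2 ≤ L := (div_le_iff₀ hpos).2 (hbound t ht')
    rw [neg_div]
    linarith
  have h := hmono (Set.left_mem_Icc.2 hT.le) (Set.right_mem_Icc.2 hT.le) hT.le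
  simp only [h0, add_zero, inv_one, mul_zero] at h
  have hinv : (1 + φ T)⁻¹ ≤ (1 + σ)⁻¹ := inv_anti₀ (by linarith) (by linarith)
  have hsub : σ / (1 + σ) = 1 - (1 + σ)⁻¹ := by
    field_simp
    ring
  rw [mul_comm L, ← div_div, div_le_iff₀ hL, hsub]
  linarith
end
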